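/- Let (H_•, P_•) be a Hilbert complex of length n and fix 0 ≤ k ≤ n. If the cohomology H^k := ker(P_k)/ran(P_{k−1}) is finite dimensional, then ran(P_{k−1}) is a closed subspace of H_k, and the quotient map ker(P_k) → H^k restricts to a linear isomorphism from the harmonic space Ĥ^k := ker(P_k) ∩ ker(P*_{k−1}) onto H^k. -/

import Mathlib

/-!
The closed-range part is an open mapping argument. The graph of the closed operator `P_{k-1}` and
the kernel of the closed operator `P_k` are Banach spaces, and `ran(P_{k-1})` is the range of the
bounded second projection from the graph to `ker(P_k)`. A bounded operator between Banach
spaces whose range has finite codimension has closed range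
(`isClosed_range_of_finiteDimensional_quotient`).

For the Hodge isomorphism, `ker(P*_{k-1}) = ran(P_{k-1})ᗮ` (`pker_adjoint`), and for a closed
subspace `R` of `K` the orthogonal complement `K ⊓ Rᗮ` of `R` in `K` maps bijectively onto `K ⧸ R`
(`bijective_mkQ_inf_orthogonal`).
-/

open LinearMap Submodule

noncomputable section

variable {H : ℕ → Type}
  [∀ k, NormedAddCommGroup (H k)] [∀ k, InnerProductSpace ℂ (H k)]
  [∀ k, CompleteSpace (H k)]

/-- The kernel of a partially defined operator, as a submodule of the ambient space. -/
def pker {E F : Type} [NormedAddCommGroup E] [InnerProductSpace ℂ E]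
    [NormedAddCommGroup F] [InnerProductSpace ℂ F] (T : E →ₗ.[ℂ] F) : Submodule ℂ E :=
  (LinearMap.ker T.toFun).map T.domain.subtype

/-- The range of a partially defined operator. -/
def pran {E F : Type} [NormedAddCommGroup E] [InnerProductSpace ℂ E]
    [NormedAddCommGroup F] [InnerProductSpace ℂ F] (T : E →ₗ.[ℂ] F) : Submodule ℂ F :=
  LinearMap.range T.toFun

/-- `ran(P_{k−1})`, with the convention `P_{−1} = 0`. -/
def prevRange (P : ∀ k, H k →ₗ.[ℂ] H (k + 1)) : ∀ k, Submodule ℂ (H k)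
  | 0 => ⊥
  | (k + 1) => pran (P k)

/-- `ker(P*_{k−1})`, with the convention `P_{−1} = 0` (so that it is everything in degree 0). -/
def prevKerAdj (P : ∀ k, H k →ₗ.[ℂ] H (k + 1)) : ∀ k, Submodule ℂ (H k)
  | 0 => ⊤
  | (k + 1) => pker ((P k).adjoint)

/-- The harmonic space `Ĥ^k = ker(P_k) ∩ ker(P*_{k−1})`. -/
abbrev harmonicSp (P : ∀ k, H k →ₗ.[ℂ] H (k + 1)) (k : ℕ) : Submodule ℂ (H k) :=
  pker (P k) ⊓ prevKerAdj P k


/-- If `V` is a finite dimensional algebraic complement of the range of `f`, then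
`(x, v) ↦ f x + v` is a continuous surjection of Banach spaces, hence a quotient map, and the
preimage of the range of `f` is the closed set `v = 0`. -/
lemma isClosed_range_of_finiteDimensional_quotient {E F : Type*}
    [NormedAddCommGroup E] [NormedSpace ℂ E] [CompleteSpace E]
    [NormedAddCommGroup F] [NormedSpace ℂ F] [CompleteSpace F] (f : E →L[ℂ] F)
    (R : Submodule ℂ F) (hR : ∀ y, y ∈ R ↔ ∃ x, f x = y) [FiniteDimensional ℂ (F ⧸ R)] :
    IsClosed (R : Set F) := by
  obtain ⟨V, hV⟩ := R.exists_isCompl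
  have : FiniteDimensional ℂ V :=
    (Submodule.quotientEquivOfIsCompl R V hV).finiteDimensional
  have : CompleteSpace V := FiniteDimensional.complete ℂ V
  let g : (E × V) →L[ℂ] F := f.coprod V.subtypeL
  have hg : ∀ p : E × V, g p = f p.1 + (p.2 : F) := fun p => rfl
  have hsurj : Function.Surjective g := by
    intro y
    obtain ⟨r, hr, v, hv, rfl⟩ := Submodule.mem_sup.1
      (hV.sup_eq_top ▸ Submodule.mem_top : y ∈ R ⊔ V)
    obtain ⟨x, rfl⟩ := (hR r).1 hr
    exact ⟨(x, ⟨v, hv⟩), rfl⟩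
  have hq := (g.isOpenMap hsurj).isQuotientMap g.continuous hsurj
  rw [← hq.isClosed_preimage]
  have hpre : g ⁻¹' (R : Set F) = {p : E × V | p.2 = 0} := by
    ext p
    have hf : f p.1 ∈ R := (hR _).2 ⟨_, rfl⟩
    simp only [Set.mem_preimage, SetLike.mem_coe, Set.mem_ofPred_eq, hg]
    rw [Submodule.add_mem_iff_right R hf]
    constructor
    · intro h
      exact Subtype.ext (Submodule.disjoint_def.1 hV.disjoint _ h p.2.2)
    · intro h
      simp [h]
  rw [hpre]
  exact isClosed_eq continuous_snd continuous_const

section Operators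

variable {E F : Type} [NormedAddCommGroup E] [InnerProductSpace ℂ E]
  [NormedAddCommGroup F] [InnerProductSpace ℂ F]

lemma mem_pker_iff (T : E →ₗ.[ℂ] F) (x : E) : x ∈ pker T ↔ (x, (0 : F)) ∈ T.graph := by
  simp only [pker, Submodule.mem_map, LinearMap.mem_ker, LinearPMap.mem_graph_iff]
  exact ⟨fun ⟨y, h, h'⟩ => ⟨y, h', h⟩, fun ⟨y, h, h'⟩ => ⟨y, h', h⟩⟩

lemma isClosed_pker (T : E →ₗ.[ℂ] F) (hT : T.IsClosed) : IsClosed (pker T : Set E) := by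
  have : (pker T : Set E) = (fun x : E => (x, (0 : F))) ⁻¹' (T.graph : Set (E × F)) := by
    ext x
    exact mem_pker_iff T x
  rw [this]
  exact IsClosed.preimage (by fun_prop) hT

lemma pker_adjoint [CompleteSpace E] (T : E →ₗ.[ℂ] F) (hT : Dense (T.domain : Set E)) :
    pker T.adjoint = (pran T)ᗮ := by
  ext y
  rw [Submodule.mem_orthogonal']
  constructor
  · rintro ⟨z, hz, rfl⟩ _ ⟨x, rfl⟩
    have h := LinearPMap.adjoint_isFormalAdjoint hT z x
    have hz' : T.adjoint z = 0 := hz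
    rw [hz', inner_zero_left] at h
    exact h.symm
  · intro h
    have h0 : ∀ x : T.domain, inner ℂ (0 : E) (x : E) = inner ℂ y (T x) := fun x => by
      rw [inner_zero_left]
      exact (h _ ⟨x, rfl⟩).symm
    have hy : y ∈ T.adjoint.domain := LinearPMap.mem_adjoint_domain_of_exists y ⟨0, h0⟩
    exact ⟨⟨y, hy⟩, LinearPMap.adjoint_apply_eq hT ⟨y, hy⟩ h0, rfl⟩

/-- Finite codimension of `ran S` in `ker T` forces `ran S` to be closed: `ran S` is the range of
the bounded second projection from the graph of `S` to `ker T`. -/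
lemma isClosed_pran {G : Type} [NormedAddCommGroup G] [InnerProductSpace ℂ G]
    [CompleteSpace E] [CompleteSpace F]
    (S : E →ₗ.[ℂ] F) (T : F →ₗ.[ℂ] G) (hS : S.IsClosed) (hT : T.IsClosed)
    (hST : pran S ≤ pker T)
    [FiniteDimensional ℂ (↥(pker T) ⧸ (pran S).comap (pker T).subtype)] :
    IsClosed (pran S : Set F) := by
  have hK := isClosed_pker T hT
  have : CompleteSpace (pker T) := hK.completeSpace_coe
  have : CompleteSpace S.graph := by
    have hS' : IsClosed (S.graph : Set (E × F)) := hS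
    exact hS'.completeSpace_coe
  have hmem : ∀ p : E × F, p ∈ S.graph → p.2 ∈ pran S := fun p hp => by
    obtain ⟨x, -, hx⟩ := (LinearPMap.mem_graph_iff S).1 hp
    exact ⟨x, hx⟩
  let f : S.graph →L[ℂ] pker T :=
    ((ContinuousLinearMap.snd ℂ E F).comp S.graph.subtypeL).codRestrict (pker T)
      fun p => hST (hmem p p.2)
  have hR := isClosed_range_of_finiteDimensional_quotient f
    ((pran S).comap (pker T).subtype) (fun y => by
      constructor
      · rintro ⟨x, hx⟩
        exact ⟨⟨(x, y), (LinearPMap.mem_graph_iff S).2 ⟨x, rfl, hx⟩⟩, rfl⟩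
      · rintro ⟨p, rfl⟩
        exact hmem p p.2)
  have himg := hK.isClosedEmbedding_subtypeVal.isClosedMap _ hR
  convert himg using 1
  ext y
  exact ⟨fun h => ⟨⟨y, hST h⟩, h, rfl⟩, by rintro ⟨z, hz, rfl⟩; exact hz⟩

lemma bijective_mkQ_inf_orthogonal [CompleteSpace E] (K R N : Submodule ℂ E) (hRK : R ≤ K)
    (hR : IsClosed (R : Set E)) (hN : N = Rᗮ) :
    Function.Bijective ((Submodule.mkQ (R.comap K.subtype)).comp
      (Submodule.inclusion (inf_le_left : K ⊓ N ≤ K))) := by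
  subst hN
  have : CompleteSpace R := hR.completeSpace_coe
  constructor
  · rw [← LinearMap.ker_eq_bot, LinearMap.ker_eq_bot']
    intro x hx
    have hx' : (x : E) ∈ R := (Submodule.Quotient.mk_eq_zero (R.comap K.subtype)).1 hx
    exact Subtype.ext (Submodule.disjoint_def.1 R.orthogonal_disjoint _ hx' x.2.2)
  · intro q
    obtain ⟨y, rfl⟩ := Submodule.Quotient.mk_surjective _ q
    obtain ⟨r, hr, z, hz, hy⟩ := R.exists_add_mem_mem_orthogonal (y : E)
    have hzK : z ∈ K := by
      have : z = (y : E) - r := by rw [hy]; abel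
      rw [this]
      exact K.sub_mem y.2 (hRK hr)
    refine ⟨⟨z, hzK, hz⟩, (Submodule.Quotient.eq _).2 ?_⟩
    change z - (y : E) ∈ R
    have : z - (y : E) = -r := by rw [hy]; abel
    rw [this]
    exact R.neg_mem hr

end Operators

/-- if the cohomology `H^k = ker(P_k)/ran(P_{k−1})` of a Hilbert complex is finite
dimensional, then `ran(P_{k−1})` is closed and the quotient map `ker(P_k) → H^k` restricts to
a linear isomorphism from the harmonic space `Ĥ^k = ker(P_k) ∩ ker(P*_{k−1})` onto `H^k`. -/
theorem finite_dimensional_cohomology_closed_range_and_hodge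
    (n : ℕ) (P : ∀ k, H k →ₗ.[ℂ] H (k + 1))
    (hdense : ∀ k, Dense ((P k).domain : Set (H k)))
    (hclosed : ∀ k, (P k).IsClosed)
    (hsub : ∀ k, ∀ x : (P k).domain, ((P k) x) ∈ (P (k + 1)).domain)
    (hcomp : ∀ k, ∀ x : (P k).domain, P (k + 1) ⟨P k x, hsub k x⟩ = 0)
    (htop : ∀ k, n ≤ k → P k = 0)
    (k : ℕ) (hk : k ≤ n)
    (hfd : FiniteDimensional ℂ
      (↥(pker (P k)) ⧸ (prevRange P k).comap (pker (P k)).subtype)) :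
    IsClosed ((prevRange P k : Set (H k))) ∧
    Function.Bijective
      ((Submodule.mkQ ((prevRange P k).comap (pker (P k)).subtype)).comp
        (Submodule.inclusion (inf_le_left : harmonicSp P k ≤ pker (P k)))) := by
  cases k with
  | zero =>
    have hR : IsClosed ((⊥ : Submodule ℂ (H 0)) : Set (H 0)) := by
      rw [Submodule.bot_coe]; exact isClosed_singleton
    exact ⟨hR, bijective_mkQ_inf_orthogonal (pker (P 0)) ⊥ ⊤ bot_le hR
      Submodule.bot_orthogonal_eq_top.symm⟩
  | succ k =>
    have hle : pran (P k) ≤ pker (P (k + 1)) := by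
      rintro _ ⟨x, rfl⟩
      exact ⟨⟨P k x, hsub k x⟩, hcomp k x, rfl⟩
    have : FiniteDimensional ℂ
        (↥(pker (P (k + 1))) ⧸ (pran (P k)).comap (pker (P (k + 1))).subtype) := hfd
    have hR := isClosed_pran (P k) (P (k + 1)) (hclosed k) (hclosed (k + 1)) hle
    exact ⟨hR, bijective_mkQ_inf_orthogonal (pker (P (k + 1))) (pran (P k))
      (pker (P k).adjoint) hle hR (pker_adjoint (P k) (hdense k))⟩
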